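/- Let n ≥ 1 be an integer, M ≥ 1 with (log(4M)/n)^{1/2} ≤ 1/3, and set a := (log(4M)/n)^{1/2} and I_a := (1−2a, 1−a). Let 0 ≤ k ≤ n be an integer and let P be a polynomial of the form P(x) = Σ_{j=k}^{n} b_j a_j x^j with a_j ∈ [1, M], b_j ∈ {−1, 0, 1} for all j, and b_k ∈ {−1, 1}. Then the geometric mean of |P| on I_a satisfies ‖P‖_{L_0(I_a)} := exp( (1/a) ∫_{1−2a}^{1−a} log|P(x)| dx ) ≥ exp( −(c_1 + 4)·(log(4M))^{1/2}·n^{1/2} ), where c_1 := 9π/√2. -/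

import Mathlib

/-!
Let `f` be bounded by `B` on the unit circle. Inside the disc, `log B - log |f|` is a nonnegative
harmonic function plus the terms `log |(1 - w̄ z) / (z - w)|`, one for each zero `w`. The harmonic
part obeys Harnack's inequality. For the other terms, the integral over `[1 - 2b, 1 - b]` is at most
`4 (1 - |w|)`, whereas the value at a fixed point `p` is at least a constant times `1 - |w|`. Hence
`∫ (log B - log |f|)` over `[1 - 2b, 1 - b]` is at most a constant times `log B - log |f p|`,
uniformly in `b`.

Write `P = x ^ k q`. Bounded coefficients give `|q z| ≤ M / (1 - |z|)`. On the disc with diameter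
`[-1/3, 1]`, tangent to the unit circle at `1`, we have `|1 - z|² ≤ 4 (1 - |z|)`, so
`(1 - z)² q z` is bounded by `4 M` there and the estimate above, rescaled to this disc with `p`
mapped to `0`, applies. The factor `x ^ k` costs at most `6 k a²`.
-/

/-! ### Harnack's inequality -/

section

open InnerProductSpace Metric Real Topology

theorem harnack_closedBall {u : ℂ → ℝ} {c z : ℂ} {R : ℝ}
    (hu : HarmonicOnNhd u (closedBall c R)) (hnonneg : ∀ ζ ∈ sphere c R, 0 ≤ u ζ)
    (hz : z ∈ ball c R) :
    (R - ‖z - c‖) / (R + ‖z - c‖) * u c ≤ u z ∧ u z ≤ (R + ‖z - c‖) / (R - ‖z - c‖) * u c := by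
  have hR : 0 < R := pos_of_mem_ball hz
  have hsphere : sphere c |R| = sphere c R := by rw [abs_of_pos hR]
  have hucont : ContinuousOn u (sphere c |R|) :=
    hsphere ▸ hu.continuousOn.mono sphere_subset_closedBall
  have hmean : circleAverage u c R = u c :=
    InnerProductSpace.HarmonicOnNhd.circleAverage_eq (by rwa [abs_of_pos hR])
  have hconst (k : ℝ) : CircleIntegrable (fun ζ ↦ k • u ζ) c R :=
    (hucont.const_smul k).circleIntegrable'
  have hpoisson : circleAverage (fun ζ ↦ (herglotzRieszKernel c z ζ).re * u ζ) c R = u z :=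
    hu.circleAverage_re_herglotzRieszKernel_smul hz
  have hint : CircleIntegrable (fun ζ ↦ (herglotzRieszKernel c z ζ).re * u ζ) c R :=
    ((Complex.continuous_re.comp_continuousOn
      (continuousOn_herglotzRieszKernel_sphere hz)).mul hucont).circleIntegrable'
  rw [← hmean, ← hpoisson, ← smul_eq_mul, ← smul_eq_mul, ← circleAverage_fun_smul,
    ← circleAverage_fun_smul]
  constructor
  · refine circleAverage_mono (hconst _) hint fun ζ hζ ↦ ?_
    rw [hsphere] at hζ
    exact mul_le_mul_of_nonneg_right (le_re_herglotzRieszKernel hζ hz) (hnonneg ζ hζ)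
  · refine circleAverage_mono hint (hconst _) fun ζ hζ ↦ ?_
    rw [hsphere] at hζ
    exact mul_le_mul_of_nonneg_right (re_herglotzRieszKernel_le hζ hz) (hnonneg ζ hζ)

theorem harnack_ball {u : ℂ → ℝ} {c z : ℂ} {R : ℝ}
    (hu : HarmonicOnNhd u (ball c R)) (hnonneg : ∀ ζ ∈ ball c R, 0 ≤ u ζ) (hz : z ∈ ball c R) :
    (R - ‖z - c‖) / (R + ‖z - c‖) * u c ≤ u z ∧ u z ≤ (R + ‖z - c‖) / (R - ‖z - c‖) * u c := by
  have hzR : ‖z - c‖ < R := mem_ball_iff_norm.1 hz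
  have hinner : ∀ᶠ r in 𝓝[<] R,
      (r - ‖z - c‖) / (r + ‖z - c‖) * u c ≤ u z ∧ u z ≤ (r + ‖z - c‖) / (r - ‖z - c‖) * u c := by
    filter_upwards [Ioo_mem_nhdsLT hzR] with r hr
    have hsub : closedBall c r ⊆ ball c R := closedBall_subset_ball hr.2
    exact harnack_closedBall (fun ζ hζ ↦ hu ζ (hsub hζ))
      (fun ζ hζ ↦ hnonneg ζ (hsub (sphere_subset_closedBall hζ))) (mem_ball_iff_norm.2 hr.1)
  have hadd : R + ‖z - c‖ ≠ 0 := by linarith [norm_nonneg (z - c)]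
  have hsub : R - ‖z - c‖ ≠ 0 := by linarith
  constructor
  · have hcont : ContinuousAt (fun r ↦ (r - ‖z - c‖) / (r + ‖z - c‖) * u c) R := by
      fun_prop (disch := assumption)
    exact le_of_tendsto (hcont.tendsto.mono_left nhdsWithin_le_nhds) (hinner.mono fun r hr ↦ hr.1)
  · have hcont : ContinuousAt (fun r ↦ (r + ‖z - c‖) / (r - ‖z - c‖) * u c) R := by
      fun_prop (disch := assumption)
    exact ge_of_tendsto (hcont.tendsto.mono_left nhdsWithin_le_nhds) (hinner.mono fun r hr ↦ hr.2)

end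

/-! ### A logarithmic integral -/

section

open Real MeasureTheory

theorem negMulLog_le_sub_sub_mul_log {x m : ℝ} (hx : 0 ≤ x) (hm : 0 < m) :
    negMulLog x ≤ m - x - x * log m := by
  have hcancel : m * (x / m) = x := mul_div_cancel₀ x hm.ne'
  calc negMulLog x = m * negMulLog (x / m) - m * (x / m) * log m := by
        conv_lhs => rw [← hcancel, negMulLog_mul]
        simp only [negMulLog]
        ring
    _ ≤ m * (1 - x / m) - m * (x / m) * log m := by
        gcongr
        exact negMulLog_le_one_sub_self (div_nonneg hx hm.le)
    _ = m - x - x * log m := by rw [mul_sub, mul_one, hcancel]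

theorem mul_log_le_mul_log_add {x m : ℝ} (hx : 0 < x) (hm : 0 < m) :
    x * log x ≤ x * log m + x * (x / m - 1) := by
  have h := log_le_sub_one_of_pos (div_pos hx hm)
  rw [log_div hx.ne' hm.ne'] at h
  rw [← mul_add]
  gcongr
  linarith

theorem negMulLog_neg (x : ℝ) : negMulLog (-x) = -negMulLog x := by
  simp [negMulLog]

theorem negMulLog_dilation_difference_le_four_of_le_one {r : ℝ} (hr : 0 < r) (hr1 : r ≤ 1) :
    negMulLog (1 + r) + negMulLog (1 - r) - negMulLog (1 + 2 * r) - negMulLog (1 - 2 * r) ≤ 4 := by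
  have hadd := negMulLog_le_one_sub_self (x := 1 + r) (by linarith)
  have hsub := negMulLog_le_one_sub_self (x := 1 - r) (by linarith)
  have hadd_double := mul_log_le_mul_log_add (x := 1 + 2 * r) (m := 2) (by linarith) two_pos
  have hsub_double : negMulLog (2 * r - 1) ≤ 2 - 2 * r := by
    rcases le_total (2 * r) 1 with hle | hge
    · have hnonneg := negMulLog_nonneg (x := 1 - 2 * r) (by linarith) (by linarith)
      rw [← neg_sub, negMulLog_neg]
      linarith
    · linarith [negMulLog_le_one_sub_self (x := 2 * r - 1) (by linarith)]
  rw [← neg_sub (2 * r) 1, negMulLog_neg]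
  have hdouble : negMulLog (1 + 2 * r) = -((1 + 2 * r) * log (1 + 2 * r)) := neg_mul ..
  nlinarith [log_two_lt_d9]

theorem negMulLog_dilation_difference_le_four_of_one_le {r : ℝ} (hr1 : 1 ≤ r) :
    negMulLog (1 + r) + negMulLog (1 - r) - negMulLog (1 + 2 * r) - negMulLog (1 - 2 * r) ≤ 4 := by
  have hr : 0 < r := by linarith
  have hlog : log (2 * r) = log 2 + log r := log_mul two_ne_zero hr.ne'
  have hadd := negMulLog_le_sub_sub_mul_log (x := 1 + r) (by linarith) hr
  have hsub : negMulLog (1 - r) ≤ (r - 1) * log r := by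
    rcases hr1.eq_or_lt with rfl | hr1
    · simp
    · rw [← neg_sub, negMulLog_neg, negMulLog, neg_mul, neg_neg]
      gcongr
      linarith
  have hadd_double := mul_log_le_mul_log_add (x := 1 + 2 * r) (m := 2 * r)
    (by linarith) (by linarith)
  have hsub_double := negMulLog_le_sub_sub_mul_log (x := 2 * r - 1) (m := 2 * r)
    (by linarith) (by linarith)
  have herror : (1 + 2 * r) * ((1 + 2 * r) / (2 * r) - 1) ≤ 3 / 2 := by
    have hinv : r⁻¹ ≤ 1 := inv_le_one_of_one_le₀ hr1
    calc (1 + 2 * r) * ((1 + 2 * r) / (2 * r) - 1) = 1 + r⁻¹ / 2 := by field_simp; ring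
      _ ≤ 3 / 2 := by linarith
  rw [hlog] at hadd_double hsub_double
  rw [← neg_sub (2 * r) 1, negMulLog_neg]
  have hdouble : negMulLog (1 + 2 * r) = -((1 + 2 * r) * log (1 + 2 * r)) := neg_mul ..
  linarith [log_two_lt_d9]

theorem negMulLog_dilation_difference_le_four {r : ℝ} (hr : 0 < r) :
    negMulLog (1 + r) + negMulLog (1 - r) - negMulLog (1 + 2 * r) - negMulLog (1 - 2 * r) ≤ 4 :=
  (le_total r 1).elim (negMulLog_dilation_difference_le_four_of_le_one hr)
    negMulLog_dilation_difference_le_four_of_one_le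

theorem intervalIntegrable_log_const_add (t a b : ℝ) :
    IntervalIntegrable (fun y ↦ log (t + y)) volume a b := by
  simpa using
    (intervalIntegral.intervalIntegrable_log' (a := t + a) (b := t + b)).comp_add_left t

theorem intervalIntegrable_log_const_sub (t a b : ℝ) :
    IntervalIntegrable (fun y ↦ log (t - y)) volume a b := by
  simpa using
    (intervalIntegral.intervalIntegrable_log' (a := t - a) (b := t - b)).comp_sub_left t

theorem integral_log_add_sub_log_sub_le {b t : ℝ} (hb : 0 < b) (ht : 0 < t) :
    ∫ y in b..2 * b, (log (t + y) - log (t - y)) ≤ 4 * t := by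
  have hscale (x : ℝ) : negMulLog (t + x) = (1 + x / t) * negMulLog t +
      t * negMulLog (1 + x / t) := by
    rw [← negMulLog_mul, mul_add, mul_one, mul_div_cancel₀ x ht.ne']
  calc ∫ y in b..2 * b, (log (t + y) - log (t - y))
      = negMulLog (t + b) + negMulLog (t + -b) - negMulLog (t + 2 * b)
          - negMulLog (t + -(2 * b)) := by
        rw [intervalIntegral.integral_sub (intervalIntegrable_log_const_add ..)
            (intervalIntegrable_log_const_sub ..),
          intervalIntegral.integral_comp_add_left log t,
          intervalIntegral.integral_comp_sub_left log t, integral_log, integral_log]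
        simp only [negMulLog, sub_eq_add_neg]
        ring
    _ = t * (negMulLog (1 + b / t) + negMulLog (1 - b / t) - negMulLog (1 + 2 * (b / t))
          - negMulLog (1 - 2 * (b / t))) := by
        simp only [hscale, neg_div, mul_div_assoc]
        ring_nf
    _ ≤ 4 * t := by
        rw [mul_comm 4]
        gcongr
        exact negMulLog_dilation_difference_le_four (div_pos hb ht)

end

/-! ### Canonical factors of the unit disc -/

section

open Complex

open scoped ComplexConjugate

theorem norm_one_sub_conj_mul_sq (w z : ℂ) :
    ‖1 - conj w * z‖ ^ 2 = ‖z - w‖ ^ 2 + (1 - ‖w‖ ^ 2) * (1 - ‖z‖ ^ 2) := by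
  simp only [Complex.sq_norm, normSq_apply, sub_re, sub_im, mul_re, mul_im, conj_re, conj_im,
    one_re, one_im]
  ring

theorem norm_canonicalFactor_one (w z : ℂ) :
    ‖canonicalFactor 1 w z‖ = ‖1 - conj w * z‖ / ‖z - w‖ := by
  simp [canonicalFactor_apply]

theorem norm_canonicalFactor_one_le {w z : ℂ} (hw : ‖w‖ ≤ 1) (hz : ‖z‖ ≤ 1) (hwz : ‖z‖ ≠ ‖w‖) :
    ‖canonicalFactor 1 w z‖ ≤ (1 - ‖w‖ * ‖z‖) / |‖z‖ - ‖w‖| := by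
  have hd : 0 < |‖z‖ - ‖w‖| := abs_pos.2 (sub_ne_zero.2 hwz)
  have hle : |‖z‖ - ‖w‖| ≤ ‖z - w‖ := abs_norm_sub_norm_le z w
  have hprod : ‖w‖ * ‖z‖ ≤ 1 := mul_le_one₀ hw (norm_nonneg z) hz
  have hdefect : 0 ≤ (1 - ‖w‖ ^ 2) * (1 - ‖z‖ ^ 2) := by
    apply mul_nonneg <;> nlinarith [norm_nonneg w, norm_nonneg z]
  rw [norm_canonicalFactor_one, div_le_div_iff₀ (hd.trans_le hle) hd,
    ← sq_le_sq₀ (by positivity) (mul_nonneg (by linarith) (norm_nonneg _)), mul_pow, mul_pow,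
    norm_one_sub_conj_mul_sq]
  have hsq : |‖z‖ - ‖w‖| ^ 2 ≤ ‖z - w‖ ^ 2 := by gcongr
  rw [sq_abs] at hsq ⊢
  nlinarith [mul_le_mul_of_nonneg_left hsq hdefect]

theorem le_norm_canonicalFactor_one {w z : ℂ} (hw : ‖w‖ ≤ 1) (hz : ‖z‖ ≤ 1) (hwz : z ≠ w) :
    (1 + ‖w‖ * ‖z‖) / (‖z‖ + ‖w‖) ≤ ‖canonicalFactor 1 w z‖ := by
  have hd : 0 < ‖z - w‖ := norm_pos_iff.2 (sub_ne_zero.2 hwz)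
  have hle : ‖z - w‖ ≤ ‖z‖ + ‖w‖ := norm_sub_le z w
  have hdefect : 0 ≤ (1 - ‖w‖ ^ 2) * (1 - ‖z‖ ^ 2) := by
    apply mul_nonneg <;> nlinarith [norm_nonneg w, norm_nonneg z]
  rw [norm_canonicalFactor_one, div_le_div_iff₀ (hd.trans_le hle) hd,
    ← sq_le_sq₀ (by positivity) (by positivity), mul_pow, mul_pow, norm_one_sub_conj_mul_sq]
  have hsq : ‖z - w‖ ^ 2 ≤ (‖z‖ + ‖w‖) ^ 2 := by gcongr
  nlinarith [mul_le_mul_of_nonneg_left hsq hdefect]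

theorem one_sub_norm_le_log_norm_canonicalFactor {w p : ℂ} (hw : ‖w‖ < 1) (hp : ‖p‖ < 1)
    (hwp : p ≠ w) :
    1 - ‖w‖ ≤ (1 + ‖p‖) / (1 - ‖p‖) * Real.log ‖canonicalFactor 1 w p‖ := by
  have hsum : 0 < ‖p‖ + ‖w‖ := by
    linarith [norm_sub_le p w, norm_pos_iff.2 (sub_ne_zero.2 hwp)]
  have hquot : 0 < (1 + ‖w‖ * ‖p‖) / (‖p‖ + ‖w‖) := by positivity
  have hlog : (1 - ‖w‖) * (1 - ‖p‖) / (1 + ‖p‖) ≤ Real.log ‖canonicalFactor 1 w p‖ := calc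
    _ ≤ (1 - ‖w‖) * (1 - ‖p‖) / (1 + ‖w‖ * ‖p‖) := by
        have hnum : 0 ≤ (1 - ‖w‖) * (1 - ‖p‖) :=
          mul_nonneg (sub_nonneg.2 hw.le) (sub_nonneg.2 hp.le)
        exact div_le_div_of_nonneg_left hnum (by positivity)
          (by gcongr; exact mul_le_of_le_one_left (norm_nonneg p) hw.le)
    _ = 1 - ((1 + ‖w‖ * ‖p‖) / (‖p‖ + ‖w‖))⁻¹ := by field_simp; ring
    _ ≤ Real.log ((1 + ‖w‖ * ‖p‖) / (‖p‖ + ‖w‖)) := Real.one_sub_inv_le_log_of_pos hquot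
    _ ≤ Real.log ‖canonicalFactor 1 w p‖ :=
        Real.log_le_log hquot (le_norm_canonicalFactor_one hw.le hp.le hwp)
  rw [div_mul_eq_mul_div, le_div_iff₀ (by linarith)]
  rwa [div_le_iff₀' (by positivity)] at hlog

theorem log_norm_canonicalFactor_one_sub_le {w : ℂ} {y : ℝ} (hw : ‖w‖ < 1) (hy0 : 0 < y)
    (hy1 : y ≤ 1) (hwy : y ≠ 1 - ‖w‖) :
    Real.log ‖canonicalFactor 1 w ((1 - y : ℝ) : ℂ)‖ ≤
      Real.log (1 - ‖w‖ + y) - Real.log (1 - ‖w‖ - y) := by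
  have hz : ‖((1 - y : ℝ) : ℂ)‖ = 1 - y := by
    rw [norm_real, Real.norm_of_nonneg (by linarith)]
  have hne : ((1 - y : ℝ) : ℂ) ≠ w := fun h ↦ hwy (by rw [← h, hz]; ring)
  have hsub : 1 - ‖w‖ - y ≠ 0 := fun h ↦ hwy (by linarith)
  rw [← Real.log_abs (1 - ‖w‖ - y), ← Real.log_div (by linarith) (abs_ne_zero.2 hsub)]
  refine Real.log_le_log ?_ ?_
  · exact norm_pos_iff.2 (canonicalFactor_ne_zero (by simpa using hw)
      (by simp only [mem_closedBall_zero_iff, hz]; linarith) hne)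
  · refine (norm_canonicalFactor_one_le hw.le (by linarith)
      (by contrapose! hwy; linarith)).trans ?_
    rw [hz, sub_right_comm 1 y]
    gcongr
    nlinarith

end

/-! ### Logarithmic integrals of polynomials near the unit circle -/

section

open Complex Metric MeasureTheory Polynomial InnerProductSpace

open scoped ComplexConjugate

theorem intervalIntegrable_log_norm_comp_ofReal {F : ℂ → ℂ} (hF : Meromorphic F) (α β : ℝ) :
    IntervalIntegrable (fun x : ℝ ↦ Real.log ‖F x‖) volume α β := by
  refine MeromorphicOn.intervalIntegrable_log_norm fun x _ ↦ ?_
  obtain ⟨n, hn⟩ := hF x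
  exact ⟨n, by simpa [Function.comp_def] using
    hn.restrictScalars (𝕜 := ℝ) |>.comp (Complex.ofRealCLM.analyticAt x)⟩

theorem intervalIntegrable_log_norm_eval (f : ℂ[X]) (α β : ℝ) :
    IntervalIntegrable (fun x : ℝ ↦ Real.log ‖f.eval (x : ℂ)‖) volume α β :=
  intervalIntegrable_log_norm_comp_ofReal
    (fun z ↦ (f.differentiable.analyticAt z).meromorphicAt) α β

theorem ae_eval_ofReal_ne_zero {f : ℂ[X]} (hf : f ≠ 0) : ∀ᵐ x : ℝ, f.eval (x : ℂ) ≠ 0 := by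
  have hfin : {x : ℝ | f.eval (x : ℂ) = 0}.Finite :=
    (f.finite_setOfPred_isRoot hf).preimage Complex.ofReal_injective.injOn
  simpa [ae_iff] using hfin.measure_zero volume

theorem integral_log_norm_canonicalFactor_le {w : ℂ} {b : ℝ} (hw : ‖w‖ < 1) (hb : 0 < b)
    (hb2 : b ≤ 1 / 2) :
    ∫ x in (1 - 2 * b)..(1 - b), Real.log ‖canonicalFactor 1 w (x : ℂ)‖ ≤ 4 * (1 - ‖w‖) := by
  have hle : b ≤ 2 * b := by linarith
  have hbound : ∀ᵐ y, y ∈ Set.Icc b (2 * b) → Real.log ‖canonicalFactor 1 w ((1 - y : ℝ) : ℂ)‖ ≤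
      Real.log (1 - ‖w‖ + y) - Real.log (1 - ‖w‖ - y) := by
    filter_upwards [volume.ae_ne (1 - ‖w‖)] with y hy hmem
    exact log_norm_canonicalFactor_one_sub_le hw (hb.trans_le hmem.1) (by linarith [hmem.2]) hy
  calc ∫ x in (1 - 2 * b)..(1 - b), Real.log ‖canonicalFactor 1 w (x : ℂ)‖
      = ∫ y in b..2 * b, Real.log ‖canonicalFactor 1 w ((1 - y : ℝ) : ℂ)‖ :=
        (intervalIntegral.integral_comp_sub_left
          (fun x : ℝ ↦ Real.log ‖canonicalFactor 1 w (x : ℂ)‖) 1).symm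
    _ ≤ ∫ y in b..2 * b, (Real.log (1 - ‖w‖ + y) - Real.log (1 - ‖w‖ - y)) := by
        refine intervalIntegral.integral_mono_ae_restrict hle ?_
          ((intervalIntegrable_log_const_add ..).sub (intervalIntegrable_log_const_sub ..))
          ((ae_restrict_iff' measurableSet_Icc).2 hbound)
        simpa using (intervalIntegrable_log_norm_comp_ofReal
          (meromorphic_canonicalFactor 1 w) (1 - b) (1 - 2 * b)).comp_sub_left 1
    _ ≤ 4 * (1 - ‖w‖) := integral_log_add_sub_log_sub_le hb (sub_pos.2 hw)

theorem norm_le_on_closedBall_of_norm_le_on_sphere {f : ℂ → ℂ} {c z : ℂ} {R B : ℝ} (hR : 0 < R)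
    (hf : DiffContOnCl ℂ f (ball c R)) (hB : ∀ ζ ∈ sphere c R, ‖f ζ‖ ≤ B)
    (hz : z ∈ closedBall c R) : ‖f z‖ ≤ B := by
  refine Complex.norm_le_of_forall_mem_frontier_norm_le isBounded_ball hf ?_ ?_
  · rwa [frontier_ball c hR.ne']
  · rwa [closure_ball c hR.ne']

theorem log_sub_log_norm_le_of_forall_ne_zero {f : ℂ → ℂ} {p z : ℂ} {B : ℝ}
    (hf : DiffContOnCl ℂ f (ball 0 1)) (hB : ∀ ζ ∈ sphere 0 1, ‖f ζ‖ ≤ B)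
    (hne : ∀ ζ ∈ ball 0 1, f ζ ≠ 0) (hp : ‖p‖ < 1) (hz : ‖z‖ < 1) :
    Real.log B - Real.log ‖f z‖ ≤
      (1 + ‖z‖) / (1 - ‖z‖) * ((1 + ‖p‖) / (1 - ‖p‖) * (Real.log B - Real.log ‖f p‖)) := by
  have hharm : HarmonicOnNhd (fun ζ ↦ Real.log B - Real.log ‖f ζ‖) (ball 0 1) := by
    intro ζ hζ
    have han : AnalyticAt ℂ f ζ := hf.differentiableOn.analyticAt (isOpen_ball.mem_nhds hζ)
    exact (harmonicAt_const _).sub (han.harmonicAt_log_norm (hne ζ hζ))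
  have hnonneg : ∀ ζ ∈ ball 0 1, 0 ≤ Real.log B - Real.log ‖f ζ‖ := fun ζ hζ ↦
    sub_nonneg.2 (Real.log_le_log (norm_pos_iff.2 (hne ζ hζ))
      (norm_le_on_closedBall_of_norm_le_on_sphere one_pos hf hB (ball_subset_closedBall hζ)))
  have hupper := (harnack_ball hharm hnonneg (mem_ball_zero_iff.2 hz)).2
  have hlower := (harnack_ball hharm hnonneg (mem_ball_zero_iff.2 hp)).1
  rw [sub_zero] at hupper hlower
  have hcentre : Real.log B - Real.log ‖f 0‖ ≤
      (1 + ‖p‖) / (1 - ‖p‖) * (Real.log B - Real.log ‖f p‖) := by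
    rw [div_mul_eq_mul_div, div_le_iff₀ (by positivity)] at hlower
    rw [div_mul_eq_mul_div, le_div_iff₀ (by linarith)]
    linarith
  exact hupper.trans (mul_le_mul_of_nonneg_left hcentre
    (div_nonneg (by positivity) (by linarith)))

theorem integral_log_sub_log_norm_eval_le_of_forall_ne_zero {f : ℂ[X]} {p : ℂ} {B b : ℝ}
    (hB : ∀ z ∈ sphere 0 1, ‖f.eval z‖ ≤ B) (hne : ∀ z ∈ ball 0 1, f.eval z ≠ 0)
    (hp : ‖p‖ < 1) (hb : 0 < b) (hb2 : b ≤ 1 / 2) :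
    ∫ x in (1 - 2 * b)..(1 - b), (Real.log B - Real.log ‖f.eval (x : ℂ)‖) ≤
      4 * ((1 + ‖p‖) / (1 - ‖p‖)) * (Real.log B - Real.log ‖f.eval p‖) := by
  have hdiff : DiffContOnCl ℂ (fun z ↦ f.eval z) (ball 0 1) := f.differentiable.diffContOnCl
  set D := (1 + ‖p‖) / (1 - ‖p‖) * (Real.log B - Real.log ‖f.eval p‖) with hD
  have hD0 : 0 ≤ D := by
    have hpB := norm_le_on_closedBall_of_norm_le_on_sphere one_pos hdiff hB
      (mem_closedBall_zero_iff.2 hp.le)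
    have hfp := norm_pos_iff.2 (hne p (mem_ball_zero_iff.2 hp))
    exact mul_nonneg (div_nonneg (by positivity) (by linarith))
      (sub_nonneg.2 (Real.log_le_log hfp hpB))
  have hpoint : ∀ x ∈ Set.Icc (1 - 2 * b) (1 - b),
      Real.log B - Real.log ‖f.eval (x : ℂ)‖ ≤ 4 / b * D := by
    intro x hx
    have hnorm : ‖(x : ℂ)‖ = x := by rw [norm_real, Real.norm_of_nonneg (by linarith [hx.1])]
    refine (log_sub_log_norm_le_of_forall_ne_zero hdiff hB hne hp
      (hnorm.trans_lt (by linarith [hx.2]))).trans ?_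
    rw [hnorm]
    gcongr <;> linarith [hx.2]
  calc ∫ x in (1 - 2 * b)..(1 - b), (Real.log B - Real.log ‖f.eval (x : ℂ)‖)
      ≤ ∫ _ in (1 - 2 * b)..(1 - b), 4 / b * D :=
        intervalIntegral.integral_mono_on (by linarith)
          (intervalIntegrable_const.sub (intervalIntegrable_log_norm_eval f _ _))
          intervalIntegrable_const hpoint
    _ = 4 * ((1 + ‖p‖) / (1 - ‖p‖)) * (Real.log B - Real.log ‖f.eval p‖) := by
        rw [intervalIntegral.integral_const, smul_eq_mul, mul_assoc, ← hD]
        field_simp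
        ring

theorem eval_one_sub_conj_mul_eq {q : ℂ[X]} {w z : ℂ} (hzw : z ≠ w) :
    ((1 - C (conj w) * X) * q).eval z = canonicalFactor 1 w z * ((X - C w) * q).eval z := by
  have hsub : z - w ≠ 0 := sub_ne_zero.2 hzw
  simp only [canonicalFactor_apply, eval_mul, eval_sub, eval_one, eval_C, eval_X, ofReal_one]
  field_simp

theorem one_sub_C_mul_X_ne_zero {R : Type*} [CommRing R] [Nontrivial R] (c : R) :
    1 - C c * X ≠ (0 : R[X]) := fun h ↦ by
  simpa using congrArg (eval 0) h

theorem integral_log_norm_eval_reflect {q : ℂ[X]} (hq : q ≠ 0) (w : ℂ) (α β : ℝ) :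
    ∫ x in α..β, Real.log ‖((1 - C (conj w) * X) * q).eval (x : ℂ)‖ =
      (∫ x in α..β, Real.log ‖canonicalFactor 1 w (x : ℂ)‖) +
        ∫ x in α..β, Real.log ‖((X - C w) * q).eval (x : ℂ)‖ := by
  rw [← intervalIntegral.integral_add
    (intervalIntegrable_log_norm_comp_ofReal (meromorphic_canonicalFactor 1 w) α β)
    (intervalIntegrable_log_norm_eval _ α β)]
  refine intervalIntegral.integral_congr_ae ?_
  filter_upwards [ae_eval_ofReal_ne_zero (mul_ne_zero (X_sub_C_ne_zero w) hq),
    ae_eval_ofReal_ne_zero (mul_ne_zero (one_sub_C_mul_X_ne_zero (conj w)) hq)] with x hx hx' _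
  have hxw : (x : ℂ) ≠ w := fun h ↦ hx (by simp [h])
  rw [eval_one_sub_conj_mul_eq hxw] at hx' ⊢
  rw [norm_mul, Real.log_mul (norm_ne_zero_iff.2 (left_ne_zero_of_mul hx')) (norm_ne_zero_iff.2 hx)]

theorem integral_log_sub_log_norm_eval_le_of_reflect {q : ℂ[X]} {w p : ℂ} {B b : ℝ}
    (hw : ‖w‖ < 1) (hp : ‖p‖ < 1) (hb : 0 < b) (hb2 : b ≤ 1 / 2)
    (hfp : ((X - C w) * q).eval p ≠ 0)
    (hreflect : ∫ x in (1 - 2 * b)..(1 - b),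
        (Real.log B - Real.log ‖((1 - C (conj w) * X) * q).eval (x : ℂ)‖) ≤
      4 * ((1 + ‖p‖) / (1 - ‖p‖)) *
        (Real.log B - Real.log ‖((1 - C (conj w) * X) * q).eval p‖)) :
    ∫ x in (1 - 2 * b)..(1 - b), (Real.log B - Real.log ‖((X - C w) * q).eval (x : ℂ)‖) ≤
      4 * ((1 + ‖p‖) / (1 - ‖p‖)) * (Real.log B - Real.log ‖((X - C w) * q).eval p‖) := by
  have hq : q ≠ 0 := fun h ↦ hfp (by simp [h])
  have hpw : p ≠ w := fun h ↦ hfp (by simp [h])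
  have hcf : canonicalFactor 1 w p ≠ 0 := canonicalFactor_ne_zero
    (mem_ball_zero_iff.2 hw) (mem_closedBall_zero_iff.2 hp.le) hpw
  rw [eval_one_sub_conj_mul_eq hpw, norm_mul,
    Real.log_mul (norm_ne_zero_iff.2 hcf) (norm_ne_zero_iff.2 hfp),
    intervalIntegral.integral_sub intervalIntegrable_const (intervalIntegrable_log_norm_eval _ _ _),
    integral_log_norm_eval_reflect hq] at hreflect
  rw [intervalIntegral.integral_sub intervalIntegrable_const
    (intervalIntegrable_log_norm_eval _ _ _)]
  linarith [integral_log_norm_canonicalFactor_le hw hb hb2,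
    one_sub_norm_le_log_norm_canonicalFactor hw hp hpw]

theorem countP_roots_norm_lt_one_reflect {q : ℂ[X]} (hq : q ≠ 0) {w : ℂ} (hw : ‖w‖ < 1) :
    ((X - C w) * q).roots.countP (‖·‖ < 1) =
      ((1 - C (conj w) * X) * q).roots.countP (‖·‖ < 1) + 1 := by
  have hin : (X - C w).roots.countP (‖·‖ < 1) = 1 := by
    rw [roots_X_sub_C]
    exact Multiset.countP_eq_card.2 fun z hz ↦ by rwa [Multiset.mem_singleton.1 hz]
  have hout : (1 - C (conj w) * X).roots.countP (‖·‖ < 1) = 0 := by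
    refine Multiset.countP_eq_zero.2 fun z hz hz1 ↦ ?_
    have hroot : conj w * z = 1 := by
      have hz0 : 1 - conj w * z = 0 := by simpa using isRoot_of_mem_roots hz
      exact (sub_eq_zero.1 hz0).symm
    have hnorm : ‖w‖ * ‖z‖ = 1 := by simpa using congrArg norm hroot
    exact (mul_lt_one_of_nonneg_of_lt_one_left (norm_nonneg w) hw hz1.le).ne hnorm
  rw [roots_mul (mul_ne_zero (X_sub_C_ne_zero w) hq),
    roots_mul (mul_ne_zero (one_sub_C_mul_X_ne_zero _) hq), Multiset.countP_add,
    Multiset.countP_add, hin, hout, zero_add, add_comm]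

theorem norm_eval_reflect_of_mem_sphere (q : ℂ[X]) {w z : ℂ} (hw : ‖w‖ < 1)
    (hz : z ∈ sphere (0 : ℂ) 1) :
    ‖((1 - C (conj w) * X) * q).eval z‖ = ‖((X - C w) * q).eval z‖ := by
  have hzw : z ≠ w := by
    rintro rfl
    exact hw.ne (mem_sphere_zero_iff_norm.1 hz)
  rw [eval_one_sub_conj_mul_eq hzw, norm_mul,
    norm_canonicalFactor_eval_circle_eq_one (mem_ball_zero_iff.2 hw) hz, one_mul]

theorem integral_log_sub_log_norm_eval_le {f : ℂ[X]} {p : ℂ} {B b : ℝ}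
    (hB : ∀ z ∈ sphere 0 1, ‖f.eval z‖ ≤ B) (hp : ‖p‖ < 1) (hfp : f.eval p ≠ 0)
    (hb : 0 < b) (hb2 : b ≤ 1 / 2) :
    ∫ x in (1 - 2 * b)..(1 - b), (Real.log B - Real.log ‖f.eval (x : ℂ)‖) ≤
      4 * ((1 + ‖p‖) / (1 - ‖p‖)) * (Real.log B - Real.log ‖f.eval p‖) := by
  have hf : f ≠ 0 := fun h ↦ hfp (by simp [h])
  induction hcount : f.roots.countP (‖·‖ < 1) generalizing f with
  | zero =>
    refine integral_log_sub_log_norm_eval_le_of_forall_ne_zero hB (fun z hz hfz ↦ ?_) hp hb hb2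
    exact Multiset.countP_eq_zero.1 hcount z (mem_roots'.2 ⟨hf, hfz⟩) (mem_ball_zero_iff.1 hz)
  | succ m ih =>
    have hpos : 0 < f.roots.countP (‖·‖ < 1) := hcount ▸ m.succ_pos
    obtain ⟨w, hroot, hw⟩ := Multiset.countP_pos.1 hpos
    obtain ⟨q, rfl⟩ := dvd_iff_isRoot.2 (isRoot_of_mem_roots hroot)
    have hq : q ≠ 0 := right_ne_zero_of_mul hf
    have hpw : p ≠ w := fun h ↦ hfp (by simp [h])
    refine integral_log_sub_log_norm_eval_le_of_reflect hw hp hb hb2 hfp (ih ?_ ?_ ?_ ?_)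
    · exact fun z hz ↦ (norm_eval_reflect_of_mem_sphere q hw hz).trans_le (hB z hz)
    · rw [eval_one_sub_conj_mul_eq hpw]
      exact mul_ne_zero (canonicalFactor_ne_zero
        (mem_ball_zero_iff.2 hw) (mem_closedBall_zero_iff.2 hp.le) hpw) hfp
    · exact mul_ne_zero (one_sub_C_mul_X_ne_zero _) hq
    · rw [countP_roots_norm_lt_one_reflect hq hw] at hcount
      exact Nat.succ_injective hcount

end

/-! ### Polynomials with bounded coefficients -/

section

open Complex Metric Polynomial

theorem norm_eval_mul_one_sub_norm_le {𝕜 : Type*} [NormedField 𝕜] {q : 𝕜[X]} {z : 𝕜} {M : ℝ}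
    (hq : ∀ j, ‖q.coeff j‖ ≤ M) (hz : ‖z‖ ≤ 1) : ‖q.eval z‖ * (1 - ‖z‖) ≤ M := by
  have hM : 0 ≤ M := (norm_nonneg _).trans (hq 0)
  calc ‖q.eval z‖ * (1 - ‖z‖)
      ≤ (∑ j ∈ Finset.range (q.natDegree + 1), M * ‖z‖ ^ j) * (1 - ‖z‖) := by
        rw [eval_eq_sum_range]
        refine mul_le_mul_of_nonneg_right (norm_sum_le_of_le _ fun j _ ↦ ?_) (sub_nonneg.2 hz)
        rw [norm_mul, norm_pow]
        gcongr
        exact hq j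
    _ = M * (1 - ‖z‖ ^ (q.natDegree + 1)) := by
        rw [← Finset.mul_sum, mul_assoc, geom_sum_mul_neg]
    _ ≤ M := mul_le_of_le_one_right hM (sub_le_self 1 (by positivity))

theorem norm_le_one_of_mem_closedBall {z : ℂ} (hz : z ∈ closedBall (1 / 3 : ℂ) (2 / 3)) :
    ‖z‖ ≤ 1 := by
  have hcentre : ‖(1 / 3 : ℂ)‖ = 1 / 3 := by norm_num
  linarith [norm_le_norm_add_norm_sub' z (1 / 3), mem_closedBall_iff_norm.1 hz]

theorem norm_one_sub_sq_le_of_mem_closedBall {z : ℂ} (hz : z ∈ closedBall (1 / 3 : ℂ) (2 / 3)) :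
    ‖1 - z‖ ^ 2 ≤ 4 * (1 - ‖z‖) := by
  have hdisc : ‖1 - z‖ ^ 2 ≤ 2 * (1 - ‖z‖ ^ 2) := by
    have hsq : ‖z - 1 / 3‖ ^ 2 ≤ (2 / 3) ^ 2 := by
      gcongr
      exact mem_closedBall_iff_norm.1 hz
    simp only [Complex.sq_norm, normSq_apply, sub_re, sub_im, one_re, one_im, div_ofNat_re,
      div_ofNat_im] at hsq ⊢
    linarith
  nlinarith [norm_nonneg z, norm_le_one_of_mem_closedBall hz]

theorem norm_eval_mul_one_sub_X_sq_le {q : ℂ[X]} {z : ℂ} {M : ℝ} (hq : ∀ j, ‖q.coeff j‖ ≤ M)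
    (hz : z ∈ closedBall (1 / 3 : ℂ) (2 / 3)) : ‖(q * (1 - X) ^ 2).eval z‖ ≤ 4 * M := by
  calc ‖(q * (1 - X) ^ 2).eval z‖ = ‖q.eval z‖ * ‖1 - z‖ ^ 2 := by simp
    _ ≤ ‖q.eval z‖ * (4 * (1 - ‖z‖)) := by
        gcongr
        exact norm_one_sub_sq_le_of_mem_closedBall hz
    _ = 4 * (‖q.eval z‖ * (1 - ‖z‖)) := by ring
    _ ≤ 4 * M := by
        gcongr
        exact norm_eval_mul_one_sub_norm_le hq (norm_le_one_of_mem_closedBall hz)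

theorem integral_log_sub_log_norm_eval_le_of_sphere_third {F : ℂ[X]} {B a : ℝ}
    (hB : ∀ z ∈ sphere (1 / 3 : ℂ) (2 / 3), ‖F.eval z‖ ≤ B) (hF : F.eval 0 ≠ 0)
    (ha0 : 0 < a) (ha : a ≤ 1 / 3) :
    ∫ x in (1 - 2 * a)..(1 - a), (Real.log B - Real.log ‖F.eval (x : ℂ)‖) ≤
      8 * (Real.log B - Real.log ‖F.eval 0‖) := by
  let f : ℂ[X] := F.comp (C (2 / 3) * X + C (1 / 3))
  have heval (z : ℂ) : f.eval z = F.eval (2 / 3 * z + 1 / 3) := by simp [f, eval_comp]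
  have hcentre : f.eval (-1 / 2) = F.eval 0 := by
    rw [heval]
    norm_num
  have hsphere : ∀ z ∈ sphere (0 : ℂ) 1, ‖f.eval z‖ ≤ B := fun z hz ↦ by
    rw [heval]
    exact hB _ (by simpa using mem_sphere_zero_iff_norm.1 hz)
  have hf := integral_log_sub_log_norm_eval_le (p := -1 / 2) (b := 3 / 2 * a) hsphere
    (by norm_num) (hcentre ▸ hF) (by linarith) (by linarith)
  have hp : (1 + ‖(-1 / 2 : ℂ)‖) / (1 - ‖(-1 / 2 : ℂ)‖) = 3 := by norm_num
  rw [hcentre, hp] at hf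
  calc ∫ x in (1 - 2 * a)..(1 - a), (Real.log B - Real.log ‖F.eval (x : ℂ)‖)
      = 2 / 3 * ∫ y in (1 - 2 * (3 / 2 * a))..(1 - 3 / 2 * a),
          (Real.log B - Real.log ‖f.eval (y : ℂ)‖) := by
        have hleft : 2 / 3 * (1 - 2 * (3 / 2 * a)) + 1 / 3 = 1 - 2 * a := by ring
        have hright : 2 / 3 * (1 - 3 / 2 * a) + 1 / 3 = 1 - a := by ring
        rw [← hleft, ← hright, ← intervalIntegral.smul_integral_comp_mul_add, smul_eq_mul]
        simp only [heval]
        push_cast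
        rfl
    _ ≤ 8 * (Real.log B - Real.log ‖F.eval 0‖) := by linarith

theorem log_mul_le_log_of_le_one {r s : ℝ} (hr : 0 ≤ r) (hs : 0 < s) (hs1 : s ≤ 1) :
    Real.log (r * s) ≤ Real.log r := by
  rcases hr.eq_or_lt with rfl | hr
  · simp
  · exact Real.log_le_log (mul_pos hr hs) (mul_le_of_le_one_right hr.le hs1)

theorem log_add_log_le_log_mul_of_le_one {s r : ℝ} (hs : 0 < s) (hs1 : s ≤ 1) :
    Real.log s + Real.log r ≤ Real.log (s * r) := by
  rcases eq_or_ne r 0 with rfl | hr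
  · simpa using Real.log_nonpos hs.le hs1
  · exact (Real.log_mul hs.ne' hr).ge

theorem neg_eight_mul_log_le_integral_log_norm_eval {q : ℂ[X]} {M a : ℝ}
    (hq : ∀ j, ‖q.coeff j‖ ≤ M) (hq0 : 1 ≤ ‖q.coeff 0‖) (ha0 : 0 < a) (ha : a ≤ 1 / 3) :
    -(8 * Real.log (4 * M)) ≤ ∫ x in (1 - 2 * a)..(1 - a), Real.log ‖q.eval (x : ℂ)‖ := by
  have hM : 1 ≤ M := hq0.trans (hq 0)
  have hlogM : 0 ≤ Real.log (4 * M) := Real.log_nonneg (by linarith)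
  have hF0 : (q * (1 - X) ^ 2).eval 0 = q.coeff 0 := by simp [coeff_zero_eq_eval_zero]
  have hF := integral_log_sub_log_norm_eval_le_of_sphere_third
    (fun z hz ↦ norm_eval_mul_one_sub_X_sq_le hq (sphere_subset_closedBall hz))
    (by rw [hF0]; exact norm_pos_iff.1 (by linarith)) ha0 ha
  rw [hF0] at hF
  have hpoint : ∀ x ∈ Set.Icc (1 - 2 * a) (1 - a),
      Real.log ‖(q * (1 - X) ^ 2).eval (x : ℂ)‖ ≤ Real.log ‖q.eval (x : ℂ)‖ := by
    intro x hx
    have hfactor : ‖(q * (1 - X) ^ 2).eval (x : ℂ)‖ = ‖q.eval (x : ℂ)‖ * (1 - x) ^ 2 := by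
      have hsq : ((1 - X) ^ 2 : ℂ[X]).eval (x : ℂ) = ((1 - x) ^ 2 : ℝ) := by simp
      rw [eval_mul, norm_mul, hsq, norm_real, Real.norm_of_nonneg (sq_nonneg _)]
    have h1x : 0 < 1 - x := by linarith [hx.2]
    rw [hfactor]
    exact log_mul_le_log_of_le_one (norm_nonneg _) (pow_pos h1x 2)
      (pow_le_one₀ h1x.le (by linarith [hx.1]))
  have hmono := intervalIntegral.integral_mono_on (by linarith)
    (intervalIntegrable_log_norm_eval _ _ _) (intervalIntegrable_log_norm_eval _ _ _) hpoint
  rw [intervalIntegral.integral_sub intervalIntegrable_const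
    (intervalIntegrable_log_norm_eval _ _ _),
    intervalIntegral.integral_const, smul_eq_mul] at hF
  nlinarith [Real.log_nonneg hq0]

theorem three_mul_sub_one_le_log {x : ℝ} (hx : 1 / 3 ≤ x) (hx1 : x ≤ 1) :
    3 * (x - 1) ≤ Real.log x := by
  have hx0 : 0 < x := by linarith
  calc 3 * (x - 1) ≤ x⁻¹ * (x - 1) :=
        mul_le_mul_of_nonpos_right ((inv_le_comm₀ hx0 three_pos).2 (by linarith)) (by linarith)
    _ = 1 - x⁻¹ := by rw [mul_sub, mul_one, inv_mul_cancel₀ hx0.ne']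
    _ ≤ Real.log x := Real.one_sub_inv_le_log_of_pos hx0

theorem le_integral_log_norm_eval_X_pow_mul {q : ℂ[X]} {M a : ℝ} (k : ℕ)
    (hq : ∀ j, ‖q.coeff j‖ ≤ M) (hq0 : 1 ≤ ‖q.coeff 0‖) (ha0 : 0 < a) (ha : a ≤ 1 / 3) :
    -(8 * Real.log (4 * M)) - 6 * k * a ^ 2 ≤
      ∫ x in (1 - 2 * a)..(1 - a), Real.log ‖(X ^ k * q).eval (x : ℂ)‖ := by
  have hpoint : ∀ x ∈ Set.Icc (1 - 2 * a) (1 - a),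
      -(6 * k * a) + Real.log ‖q.eval (x : ℂ)‖ ≤ Real.log ‖(X ^ k * q).eval (x : ℂ)‖ := by
    intro x hx
    have hx0 : 1 / 3 ≤ x := by linarith [hx.1]
    have hpow : -(6 * k * a) ≤ Real.log (x ^ k) := by
      rw [Real.log_pow]
      calc -(6 * k * a) = k * -(6 * a) := by ring
        _ ≤ k * Real.log x := by
          gcongr
          linarith [three_mul_sub_one_le_log hx0 (by linarith [hx.2]), hx.1]
    have hnorm : ‖(X ^ k * q).eval (x : ℂ)‖ = x ^ k * ‖q.eval (x : ℂ)‖ := by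
      rw [eval_mul, norm_mul, eval_pow, eval_X, norm_pow, norm_real,
        Real.norm_of_nonneg (by linarith)]
    rw [hnorm]
    exact (add_le_add_left hpow _).trans (log_add_log_le_log_mul_of_le_one (by positivity)
      (pow_le_one₀ (by linarith) (by linarith [hx.2])))
  calc -(8 * Real.log (4 * M)) - 6 * k * a ^ 2
      ≤ (∫ _ in (1 - 2 * a)..(1 - a), -(6 * k * a)) +
          ∫ x in (1 - 2 * a)..(1 - a), Real.log ‖q.eval (x : ℂ)‖ := by
        rw [intervalIntegral.integral_const, smul_eq_mul]
        linarith [neg_eight_mul_log_le_integral_log_norm_eval hq hq0 ha0 ha]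
    _ = ∫ x in (1 - 2 * a)..(1 - a), (-(6 * k * a) + Real.log ‖q.eval (x : ℂ)‖) :=
        (intervalIntegral.integral_add intervalIntegrable_const
          (intervalIntegrable_log_norm_eval _ _ _)).symm
    _ ≤ _ :=
        intervalIntegral.integral_mono_on (by linarith)
          (intervalIntegrable_const.add (intervalIntegrable_log_norm_eval _ _ _))
          (intervalIntegrable_log_norm_eval _ _ _) hpoint

end

/-! ### The geometric mean -/

theorem fourteen_le_nine_mul_pi_div_sqrt_two_add_four :
    14 ≤ 9 * Real.pi / Real.sqrt 2 + 4 := by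
  have hsqrt : √2 ≤ 3 / 2 := (Real.sqrt_le_left (by norm_num)).2 (by norm_num)
  suffices 10 ≤ 9 * Real.pi / √2 by linarith
  rw [le_div_iff₀ (by positivity)]
  linarith [Real.pi_gt_three]

section

open Polynomial

theorem coeff_sum_monomial {R : Type*} [Semiring R] (s : Finset ℕ) (c : ℕ → R) (j : ℕ) :
    (∑ i ∈ s, monomial i (c i)).coeff j = if j ∈ s then c j else 0 := by
  simp [coeff_monomial]

theorem norm_coeff_sum_monomial_le {R : Type*} [SeminormedRing R] {s : Finset ℕ} {c : ℕ → R}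
    {M : ℝ} (hM : 0 ≤ M) (hc : ∀ j ∈ s, ‖c j‖ ≤ M) (j : ℕ) :
    ‖(∑ i ∈ s, monomial i (c i)).coeff j‖ ≤ M := by
  rw [coeff_sum_monomial]
  split_ifs with hj
  · exact hc j hj
  · rwa [norm_zero]

theorem X_pow_dvd_sum_monomial {R : Type*} [Semiring R] {s : Finset ℕ} {k : ℕ}
    (hs : ∀ j ∈ s, k ≤ j) (c : ℕ → R) : X ^ k ∣ ∑ i ∈ s, monomial i (c i) :=
  X_pow_dvd_iff.2 fun d hd ↦ by
    rw [coeff_sum_monomial, if_neg fun hmem ↦ (hs d hmem).not_gt hd]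

theorem norm_eval_sum_monomial_ofReal (s : Finset ℕ) (c : ℕ → ℝ) (x : ℝ) :
    ‖(∑ j ∈ s, monomial j (c j : ℂ)).eval (x : ℂ)‖ = |∑ j ∈ s, c j * x ^ j| := by
  rw [← Real.norm_eq_abs, ← Complex.norm_real]
  simp [eval_finsetSum, eval_monomial]

theorem abs_mul_le_of_sign {b A M : ℝ} (hb : b = -1 ∨ b = 0 ∨ b = 1) (hA : A ∈ Set.Icc 1 M) :
    |b * A| ≤ M := by
  have hA0 : |A| ≤ M := abs_le.2 ⟨by linarith [hA.1, hA.2], hA.2⟩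
  rcases hb with rfl | rfl | rfl
  · simpa using hA0
  · simpa using (abs_nonneg A).trans hA0
  · simpa using hA0

theorem one_le_abs_mul_of_sign {b A : ℝ} (hb : b = -1 ∨ b = 1) (hA : 1 ≤ A) : 1 ≤ |b * A| := by
  rcases hb with rfl | rfl <;> simpa using hA.trans (le_abs_self A)

theorem exists_norm_eval_ofReal_eq_abs_sum_sign_mul {k n : ℕ} (hk : k ≤ n) {M : ℝ} {A b : ℕ → ℝ}
    (hA : ∀ j ∈ Finset.Icc k n, A j ∈ Set.Icc 1 M)
    (hb : ∀ j ∈ Finset.Icc k n, b j = -1 ∨ b j = 0 ∨ b j = 1) (hbk : b k = -1 ∨ b k = 1) :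
    ∃ P : ℂ[X], (∀ j, ‖P.coeff j‖ ≤ M) ∧ X ^ k ∣ P ∧ 1 ≤ ‖P.coeff k‖ ∧
      ∀ x : ℝ, ‖P.eval (x : ℂ)‖ = |∑ j ∈ Finset.Icc k n, b j * A j * x ^ j| := by
  have hkmem : k ∈ Finset.Icc k n := Finset.left_mem_Icc.2 hk
  have hM : 0 ≤ M := zero_le_one.trans ((hA k hkmem).1.trans (hA k hkmem).2)
  have hcoeff (j : ℕ) (hj : j ∈ Finset.Icc k n) : ‖((b j * A j : ℝ) : ℂ)‖ ≤ M :=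
    (Complex.norm_real _).trans_le (abs_mul_le_of_sign (hb j hj) (hA j hj))
  refine ⟨∑ j ∈ Finset.Icc k n, monomial j ((b j * A j : ℝ) : ℂ),
    norm_coeff_sum_monomial_le hM hcoeff,
    X_pow_dvd_sum_monomial (fun j hj ↦ (Finset.mem_Icc.1 hj).1) _, ?_,
    norm_eval_sum_monomial_ofReal _ _⟩
  rw [coeff_sum_monomial, if_pos hkmem, Complex.norm_real]
  exact one_le_abs_mul_of_sign hbk (hA k hkmem).1

theorem geometric_mean_lower_bound_special_general (n : ℕ) (hn : 1 ≤ n) (M a : ℝ)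
    (hadef : a = √(Real.log (4 * M) / n)) (ha : a ≤ 1 / 3) (k : ℕ) (hk : k ≤ n) (P : ℂ[X])
    (hP : ∀ j, ‖P.coeff j‖ ≤ M) (hdvd : X ^ k ∣ P) (hPk : 1 ≤ ‖P.coeff k‖) :
    Real.exp (-14 * √(Real.log (4 * M)) * √n) ≤
      Real.exp ((1 / a) * ∫ x in (1 - 2 * a)..(1 - a), Real.log ‖P.eval (x : ℂ)‖) := by
  obtain ⟨q, rfl⟩ := hdvd
  have hcoeff (j : ℕ) : (X ^ k * q).coeff (j + k) = q.coeff j := coeff_X_pow_mul q k j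
  have hq : ∀ j, ‖q.coeff j‖ ≤ M := fun j ↦ hcoeff j ▸ hP (j + k)
  have hq0 : 1 ≤ ‖q.coeff 0‖ := by rwa [← hcoeff, zero_add]
  have hL : 0 < Real.log (4 * M) := Real.log_pos (by linarith [hq0.trans (hq 0)])
  have hn0 : (0 : ℝ) < n := by exact_mod_cast hn
  have ha0 : 0 < a := hadef ▸ Real.sqrt_pos.2 (div_pos hL hn0)
  have ha2 : n * a ^ 2 = Real.log (4 * M) := by
    rw [hadef, Real.sq_sqrt (by positivity), mul_div_cancel₀ _ hn0.ne']
  have hna : √(Real.log (4 * M)) * √n = n * a := by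
    rw [← ha2, Real.sqrt_mul hn0.le, Real.sqrt_sq ha0.le, mul_right_comm, Real.mul_self_sqrt hn0.le]
  rw [Real.exp_le_exp, mul_assoc, hna, one_div, inv_mul_eq_div, le_div_iff₀ ha0]
  calc -14 * (n * a) * a = -(8 * Real.log (4 * M)) - 6 * n * a ^ 2 := by rw [← ha2]; ring
    _ ≤ -(8 * Real.log (4 * M)) - 6 * k * a ^ 2 := by gcongr
    _ ≤ _ := le_integral_log_norm_eval_X_pow_mul k hq hq0 ha0 ha

end

/-- With the choice `a = (log(4M)/n)^(1/2) ≤ 1/3`, the geometric mean of `|P|` on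
`I_a = (1-2a, 1-a)` is at least `exp(-(c₁+4)(log 4M)^(1/2) n^(1/2))`, `c₁ = 9π/√2`,
for `P(x) = ∑_{j=k}^n b_j a_j x^j` with `a_j ∈ [1,M]`, `b_j ∈ {-1,0,1}`, `b_k ∈ {-1,1}`. -/
theorem geometric_mean_lower_bound_special (n : ℕ) (hn : 1 ≤ n) (M : ℝ) (hM : 1 ≤ M)
    (a : ℝ) (hadef : a = Real.sqrt (Real.log (4 * M) / (n : ℝ))) (ha : a ≤ 1 / 3)
    (k : ℕ) (hk : k ≤ n)
    (A b : ℕ → ℝ)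
    (hA : ∀ j ∈ Finset.Icc k n, A j ∈ Set.Icc (1 : ℝ) M)
    (hb : ∀ j ∈ Finset.Icc k n, b j = -1 ∨ b j = 0 ∨ b j = 1)
    (hbk : b k = -1 ∨ b k = 1) :
    Real.exp ((1 / a) * ∫ x in (1 - 2 * a)..(1 - a),
        Real.log |∑ j ∈ Finset.Icc k n, b j * A j * x ^ j|) ≥
      Real.exp (-(9 * Real.pi / Real.sqrt 2 + 4) *
        Real.sqrt (Real.log (4 * M)) * Real.sqrt (n : ℝ)) := by
  obtain ⟨P, hP, hdvd, hPk, hnorm⟩ := exists_norm_eval_ofReal_eq_abs_sum_sign_mul hk hA hb hbk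
  simp only [← hnorm]
  refine le_trans ?_
    (geometric_mean_lower_bound_special_general n hn M a hadef ha k hk P hP hdvd hPk)
  gcongr
  linarith [fourteen_le_nine_mul_pi_div_sqrt_two_add_four]
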